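/- arXiv:1107.0102 — 2 statements merged into one kernel-verified Lean document; each statement's English description precedes it below -/
import Mathlib

section
/- Let Γ be a group acting freely and properly discontinuously on ℂⁿ by biholomorphic automorphisms. Let σ : ℂⁿ × ℂⁿ → ℂⁿ be a map such that for each z ∈ ℂⁿ the map σ_z = σ(z,·) is a bijection of ℂⁿ with σ_z(0) = z, and let λ : Γ → GL(n,ℂ) be a group homomorphism satisfying σ_{γ(z)} ∘ λ_γ ∘ σ_z^{-1} = γ for all z ∈ ℂⁿ and γ ∈ Γ. Then: (i) the formula γ·(z,w) = (γ(z), λ_γ w) defines an action of Γ on ℂⁿ × ℂⁿ by homeomorphisms that is free and properly discontinuous; (ii) σ is equivariant with respect to this action and the original action on ℂⁿ, i.e. σ(γ(z), λ_γ w) = γ(σ(z,w)) for all γ ∈ Γ and z, w ∈ ℂⁿ. -/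
open Matrix

/-! Both freeness and proper discontinuity pull back along the equivariant projection
`X × Y → X`: a fixed point projects to a fixed point, and a compact set meeting its translate
projects to one meeting its translate. Evaluating `σ_{γ(z)} ∘ λ_γ ∘ σ_z⁻¹ = γ` at `σ_z(w)` gives the
equivariance of `σ`. -/

theorem comp_eq_comp_of_comp_comp_invFun_eq {α β γ δ : Type*} [Nonempty α] {f : α → β}
    (hf : Function.Injective f) {a : α → γ} {g : γ → δ} {b : β → δ}
    (h : g ∘ a ∘ Function.invFun f = b) : g ∘ a = b ∘ f := by
  rw [← h, Function.comp_assoc, Function.comp_assoc, Function.invFun_comp hf, Function.comp_id]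

theorem image_inter_ne_empty_of_semiconj {X Y : Type*} {π : Y → X} {S : Y → Y} {T : X → X}
    (h : Function.Semiconj π S T) {K : Set Y} (hK : S '' K ∩ K ≠ ∅) :
    T '' (π '' K) ∩ π '' K ≠ ∅ := by
  rw [← Set.nonempty_iff_ne_empty] at hK ⊢
  rw [← h.set_image K]
  exact (hK.image π).mono (Set.image_inter_subset π (S '' K) K)

theorem finite_setOf_image_inter_ne_empty_of_semiconj {ι X Y : Type*} [TopologicalSpace X]
    [TopologicalSpace Y] {π : Y → X} (hπ : Continuous π) {S : ι → Y → Y} {T : ι → X → X}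
    (h : ∀ i, Function.Semiconj π (S i) (T i))
    (hT : ∀ K : Set X, IsCompact K → {i | T i '' K ∩ K ≠ ∅}.Finite)
    {K : Set Y} (hK : IsCompact K) : {i | S i '' K ∩ K ≠ ∅}.Finite :=
  (hT (π '' K) (hK.image hπ)).subset fun i => image_inter_ne_empty_of_semiconj (h i)

theorem continuousConstSMul_matrix_pi {m R : Type*} [Fintype m] [DecidableEq m] [Semiring R]
    [TopologicalSpace R] [IsTopologicalSemiring R] :
    ContinuousConstSMul (Matrix m m R) (m → R) :=
  ⟨fun _ => continuous_const.matrix_mulVec continuous_id⟩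

theorem extended_action_free_properlyDiscontinuous_and_sigma_equivariant_general
    {Γ G X Y Z : Type*} [Group Γ] [Group G] [TopologicalSpace X] [TopologicalSpace Y]
    [MulAction Γ X] [ContinuousConstSMul Γ X] [MulAction G Y] [ContinuousConstSMul G Y]
    [Nonempty Y] [SMul Γ Z]
    (hfree : ∀ (γ : Γ) (z : X), γ • z = z → γ = 1)
    (hpd : ∀ K : Set X, IsCompact K → {γ : Γ | ((fun z => γ • z) '' K) ∩ K ≠ ∅}.Finite)
    (σ : X → Y → Z) (hσinj : ∀ z, Function.Injective (σ z)) (lam : Γ →* G)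
    (hcompat : ∀ (γ : Γ) (z : X) (w : Z),
      σ (γ • z) (lam γ • Function.invFun (σ z) w) = γ • w)
    (ρ : Γ → X × Y → X × Y) (hρ : ∀ γ p, ρ γ p = (γ • p.1, lam γ • p.2)) :
    (∀ p, ρ 1 p = p) ∧
      (∀ (γ₁ γ₂ : Γ) (p), ρ (γ₁ * γ₂) p = ρ γ₁ (ρ γ₂ p)) ∧
      (∀ γ : Γ, IsHomeomorph (ρ γ)) ∧
      (∀ (γ : Γ) (p), ρ γ p = p → γ = 1) ∧
      (∀ K : Set (X × Y), IsCompact K → {γ : Γ | (ρ γ '' K) ∩ K ≠ ∅}.Finite) ∧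
      (∀ (γ : Γ) (z : X) (w : Y), σ (γ • z) (lam γ • w) = γ • σ z w) := by
  obtain rfl : ρ = fun γ => Prod.map (γ • ·) (lam γ • ·) := funext₂ hρ
  have hfst (γ : Γ) : Function.Semiconj Prod.fst (Prod.map (γ • ·) (lam γ • ·) : X × Y → X × Y)
      (γ • ·) := fun _ => rfl
  refine ⟨fun p => ?one, fun γ₁ γ₂ p => ?mul, fun γ => ?homeomorph, fun γ p hp => ?free,
    fun K hK => ?properlyDiscontinuous, fun γ z w => ?equivariant⟩
  case one => simp
  case mul => simp only [map_mul, mul_smul, Prod.map]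
  case homeomorph => exact (isHomeomorph_smul γ).prodMap (isHomeomorph_smul (lam γ))
  case free => exact hfree γ p.1 (Function.IsFixedPt.map hp (hfst γ))
  case properlyDiscontinuous =>
    exact finite_setOf_image_inter_ne_empty_of_semiconj continuous_fst hfst hpd hK
  case equivariant =>
    exact congrFun (comp_eq_comp_of_comp_comp_invFun_eq (hσinj z) (funext (hcompat γ z))) w

/-- Let `Γ` act freely and properly discontinuously on `ℂⁿ` by biholomorphic automorphisms.
Given `σ : ℂⁿ × ℂⁿ → ℂⁿ` with each `σ_z = σ(z,·)` a bijection satisfying `σ_z(0) = z`, and a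
homomorphism `λ : Γ → GL(n,ℂ)` with `σ_{γ(z)} ∘ λ_γ ∘ σ_z⁻¹ = γ`, the formula
`γ • (z,w) = (γ(z), λ_γ w)` defines an action of `Γ` on `ℂⁿ × ℂⁿ` by homeomorphisms which is
free and properly discontinuous, and `σ` is equivariant. -/
theorem extended_action_free_properlyDiscontinuous_and_sigma_equivariant
    {n : ℕ} {Γ : Type*} [Group Γ] [MulAction Γ (Fin n → ℂ)]
    -- Γ acts by biholomorphic automorphisms
    (hhol : ∀ γ : Γ, Differentiable ℂ (fun z : Fin n → ℂ => γ • z))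
    -- the action on ℂⁿ is free and properly discontinuous
    (hfree : ∀ (γ : Γ) (z : Fin n → ℂ), γ • z = z → γ = 1)
    (hpd : ∀ K : Set (Fin n → ℂ), IsCompact K →
      {γ : Γ | ((fun z => γ • z) '' K) ∩ K ≠ ∅}.Finite)
    -- the spray data σ and λ
    (σ : (Fin n → ℂ) → (Fin n → ℂ) → (Fin n → ℂ))
    (hσbij : ∀ z, Function.Bijective (σ z))
    (hσ0 : ∀ z, σ z 0 = z)
    (lam : Γ →* Matrix.GeneralLinearGroup (Fin n) ℂ)
    -- compatibility: σ_{γ(z)} ∘ λ_γ ∘ σ_z⁻¹ = γ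
    (hcompat : ∀ (γ : Γ) (z w : Fin n → ℂ),
      σ (γ • z) ((lam γ : Matrix (Fin n) (Fin n) ℂ) *ᵥ (Function.invFun (σ z) w)) = γ • w)
    -- the extended action γ • (z, w) = (γ(z), λ_γ w)
    (ρ : Γ → (Fin n → ℂ) × (Fin n → ℂ) → (Fin n → ℂ) × (Fin n → ℂ))
    (hρ : ∀ γ p, ρ γ p = (γ • p.1, (lam γ : Matrix (Fin n) (Fin n) ℂ) *ᵥ p.2)) :
    -- (i) ρ is an action by homeomorphisms, free and properly discontinuous
    (∀ p, ρ 1 p = p) ∧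
      (∀ (γ₁ γ₂ : Γ) (p), ρ (γ₁ * γ₂) p = ρ γ₁ (ρ γ₂ p)) ∧
      (∀ γ : Γ, IsHomeomorph (ρ γ)) ∧
      (∀ (γ : Γ) (p), ρ γ p = p → γ = 1) ∧
      (∀ K : Set ((Fin n → ℂ) × (Fin n → ℂ)), IsCompact K →
        {γ : Γ | (ρ γ '' K) ∩ K ≠ ∅}.Finite) ∧
      -- (ii) σ is equivariant: σ(γ(z), λ_γ w) = γ(σ(z,w))
      (∀ (γ : Γ) (z w : Fin n → ℂ),
        σ (γ • z) ((lam γ : Matrix (Fin n) (Fin n) ℂ) *ᵥ w) = γ • σ z w) := by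
  have : ContinuousConstSMul Γ (Fin n → ℂ) := ⟨fun γ => (hhol γ).continuous⟩
  have := continuousConstSMul_matrix_pi (m := Fin n) (R := ℂ)
  exact extended_action_free_properlyDiscontinuous_and_sigma_equivariant_general
    hfree hpd σ (fun z => (hσbij z).injective) lam hcompat ρ hρ
end

section
/- Let F₂ denote the free group on two generators. There exists a family, indexed by a set of cardinality 2^{ℵ₀} (the continuum), of subgroups of the direct product F₂ × F₂ that are pairwise non-isomorphic as abstract groups. -/
/-!
In a free group commutation is transitive on nontrivial elements. Hence, for a homomorphism
`f : L →* Q` out of a free group with noncommutative kernel, an element `(x, y)` of the kernel pair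
`{(x, y) | f x = f y} ≤ L × L` whose two coordinates are nontrivial has commutative centralizer,
whereas `(k, 1)` and `(1, k)` with `k ∈ f.ker` commute with a copy of `f.ker`. So the elements with
noncommutative centralizer generate exactly `f.ker × f.ker`, and dividing by them recovers `Q` from
the abstract group underlying the kernel pair. Free groups of countable rank embed into `F₂`, so
every countable group `Q` arises in this way inside `F₂ × F₂`; the groups `⨁ p ∈ S, ℤ/p`, for `S` a
set of primes, already provide continuum many isomorphism types.
-/

namespace BaumslagRoseblade

open FreeGroup (of)

section FreeGroup

variable {α : Type*}

theorem eq_of_commute_of_of_toWord_eq_cons [DecidableEq α] {x : FreeGroup α} {i j : α} {e : Bool}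
    {w : List (α × Bool)} (hw : x.toWord = (i, e) :: w) (h : Commute (of j) x) : j = i := by
  by_contra hji
  have reduced_cons : FreeGroup.IsReduced ((j, true) :: (i, e) :: w) :=
    List.isChain_cons_cons.2 ⟨fun hij ↦ absurd hij hji, hw ▸ FreeGroup.isReduced_toWord⟩
  have toWord_of_mul : (of j * x).toWord = (j, true) :: (i, e) :: w := by
    rw [FreeGroup.toWord_mul, FreeGroup.toWord_of, hw, List.singleton_append,
      reduced_cons.reduce_eq]
  have sublist := FreeGroup.toWord_mul_sublist x (of j)
  rw [← h.eq, toWord_of_mul, hw, FreeGroup.toWord_of] at sublist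
  have words_eq := sublist.eq_of_length (by simp)
  exact hji (congrArg Prod.fst (List.head_eq_of_cons_eq words_eq))

theorem not_commute_of_of {a b : α} (hab : a ≠ b) : ¬Commute (of a) (of b) := by
  classical
  exact fun h ↦ hab (eq_of_commute_of_of_toWord_eq_cons (FreeGroup.toWord_of b) h)

theorem subsingleton_of_forall_commute_of {x : FreeGroup α} (hx : x ≠ 1)
    (h : ∀ j, Commute (of j) x) : Subsingleton α := by
  classical
  obtain ⟨⟨i, e⟩, w, hw⟩ := List.exists_cons_of_ne_nil (mt FreeGroup.toWord_eq_nil_iff.1 hx)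
  exact ⟨fun a b ↦ (eq_of_commute_of_of_toWord_eq_cons hw (h a)).trans
    (eq_of_commute_of_of_toWord_eq_cons hw (h b)).symm⟩

theorem commute_of_subsingleton [Subsingleton α] (u v : FreeGroup α) : Commute u v := by
  rcases isEmpty_or_nonempty α with _ | ⟨⟨a⟩⟩
  · exact Subsingleton.elim _ _
  · let _ : Unique α := uniqueOfSubsingleton a
    exact FreeGroup.mulEquivIntOfUnique.injective (by rw [map_mul, map_mul, mul_comm])

theorem commute_of_mem_center {G : Type*} [Group G] [IsFreeGroup G] {x : G} (hx : x ≠ 1)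
    (hc : x ∈ Subgroup.center G) (u v : G) : Commute u v := by
  let e := IsFreeGroup.toFreeGroup G
  have : Subsingleton (IsFreeGroup.Generators G) := by
    refine subsingleton_of_forall_commute_of (x := e x) (by simpa using hx) fun j ↦ ?_
    rw [← e.apply_symm_apply (of j)]
    exact Commute.map (Subgroup.mem_center_iff.1 hc _) e
  simpa using (commute_of_subsingleton (e u) (e v)).map e.symm

end FreeGroup

/-- A group is commutation transitive if commuting is a transitive relation on its nontrivial
elements, i.e. if the centralizer of every nontrivial element is commutative. -/
def IsCommutationTransitive (G : Type*) [Group G] : Prop :=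
  ∀ ⦃x u v : G⦄, x ≠ 1 → Commute x u → Commute x v → Commute u v

theorem isCommutationTransitive_of_isFreeGroup (G : Type*) [Group G] [IsFreeGroup G] :
    IsCommutationTransitive G := by
  intro x u v hx hu hv
  let C := Subgroup.centralizer {x}
  have mem_C {w : G} (hw : Commute x w) : w ∈ C :=
    Subgroup.mem_centralizer_singleton_iff.2 hw.symm
  let x' : C := ⟨x, mem_C (Commute.refl x)⟩
  have hx' : x' ≠ 1 := fun h ↦ hx (congrArg Subtype.val h)
  have x'_mem_center : x' ∈ Subgroup.center C := Subgroup.mem_center_iff.2 fun w ↦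
    Subtype.ext (Subgroup.mem_centralizer_singleton_iff.1 w.2)
  -- By Nielsen–Schreier the centralizer `C` is itself free, and `x'` is central in it.
  exact (commute_of_mem_center hx' x'_mem_center ⟨u, mem_C hu⟩ ⟨v, mem_C hv⟩).map C.subtype

section NoncommutativeCentralizers

variable {G H : Type*} [Group G] [Group H]

/-- The subgroup generated by the elements with noncommutative centralizer. It is the
isomorphism-invariant piece of a kernel pair that allows one to reconstruct the base. -/
def noncommCentralizerClosure (G : Type*) [Group G] : Subgroup G :=
  Subgroup.closure {g | ∃ u v, Commute g u ∧ Commute g v ∧ ¬Commute u v}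

theorem map_noncommCentralizerClosure_le (e : G ≃* H) :
    (noncommCentralizerClosure G).map (e : G →* H) ≤ noncommCentralizerClosure H := by
  refine Subgroup.map_le_iff_le_comap.2 ((Subgroup.closure_le _).2 ?_)
  rintro g ⟨u, v, hu, hv, huv⟩
  exact Subgroup.subset_closure ⟨e u, e v, hu.map e, hv.map e, mt (Commute.of_map e.injective) huv⟩

theorem map_noncommCentralizerClosure (e : G ≃* H) :
    (noncommCentralizerClosure G).map (e : G →* H) = noncommCentralizerClosure H := by
  refine le_antisymm (map_noncommCentralizerClosure_le e) ?_
  rw [Subgroup.map_equiv_eq_comap_symm, ← Subgroup.map_le_iff_le_comap]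
  exact map_noncommCentralizerClosure_le e.symm

end NoncommutativeCentralizers

section KernelPair

variable {L Q : Type*} [Group L] [Group Q]

/-- The kernel pair of `f : L →* Q`, i.e. the fibre product `L ×_Q L` of `f` with itself, as a
subgroup of `L × L`. -/
def kernelPair (f : L →* Q) : Subgroup (L × L) :=
  (f.comp (MonoidHom.fst L L)).eqLocus (f.comp (MonoidHom.snd L L))

/-- The structure map `(x, y) ↦ f x = f y` of the fibre product `L ×_Q L`. -/
def kernelPairHom (f : L →* Q) : kernelPair f →* Q :=
  (f.comp (MonoidHom.fst L L)).comp (kernelPair f).subtype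

theorem kernelPairHom_eq_snd {f : L →* Q} (g : kernelPair f) : kernelPairHom f g = f g.1.2 :=
  g.2

theorem kernelPairHom_surjective {f : L →* Q} (hf : Function.Surjective f) :
    Function.Surjective (kernelPairHom f) :=
  fun q ↦ (hf q).imp' (fun x ↦ (⟨(x, x), rfl⟩ : kernelPair f)) fun _ hx ↦ hx

/-- The embedding of `f.ker` into the kernel pair as the kernel of the second projection. -/
def kerInl (f : L →* Q) : f.ker →* kernelPair f :=
  ((MonoidHom.inl L L).comp f.ker.subtype).codRestrict _ fun k ↦ k.2.trans (map_one f).symm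

/-- The embedding of `f.ker` into the kernel pair as the kernel of the first projection. -/
def kerInr (f : L →* Q) : f.ker →* kernelPair f :=
  ((MonoidHom.inr L L).comp f.ker.subtype).codRestrict _ fun k ↦ (map_one f).trans k.2.symm

theorem kerInl_mul_kerInr {f : L →* Q} (k k' : f.ker) :
    (kerInl f k * kerInr f k').1 = ((k : L), (k' : L)) :=
  Prod.ext (mul_one _) (one_mul _)

theorem commute_kerInl_kerInr (f : L →* Q) (k k' : f.ker) :
    Commute (kerInl f k) (kerInr f k') :=
  Subtype.ext (MonoidHom.commute_inl_inr (k : L) (k' : L))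

theorem kerInl_injective (f : L →* Q) : Function.Injective (kerInl f) :=
  fun _ _ h ↦ Subtype.ext (congrArg (fun g : kernelPair f ↦ g.1.1) h)

theorem kerInr_injective (f : L →* Q) : Function.Injective (kerInr f) :=
  fun _ _ h ↦ Subtype.ext (congrArg (fun g : kernelPair f ↦ g.1.2) h)

theorem noncommCentralizerClosure_kernelPair_le (hL : IsCommutationTransitive L) (f : L →* Q) :
    noncommCentralizerClosure (kernelPair f) ≤ (kernelPairHom f).ker := by
  refine (Subgroup.closure_le _).2 ?_
  rintro g ⟨u, v, hu, hv, huv⟩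
  let fst := (MonoidHom.fst L L).comp (kernelPair f).subtype
  let snd := (MonoidHom.snd L L).comp (kernelPair f).subtype
  by_contra hg
  have fst_ne_one : fst g ≠ 1 := fun h ↦ hg ((congrArg f h).trans (map_one f))
  have snd_ne_one : snd g ≠ 1 := fun h ↦
    hg ((kernelPairHom_eq_snd g).trans ((congrArg f h).trans (map_one f)))
  have fst_commute : Commute (fst u) (fst v) := hL fst_ne_one (hu.map fst) (hv.map fst)
  have snd_commute : Commute (snd u) (snd v) := hL snd_ne_one (hu.map snd) (hv.map snd)
  exact huv (Subtype.ext (fst_commute.prod snd_commute))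

theorem ker_kernelPairHom_le {f : L →* Q} (hf : ∃ u v : f.ker, ¬Commute u v) :
    (kernelPairHom f).ker ≤ noncommCentralizerClosure (kernelPair f) := by
  obtain ⟨u, v, huv⟩ := hf
  intro g hg
  let k : f.ker := ⟨g.1.1, hg⟩
  let k' : f.ker := ⟨g.1.2, (kernelPairHom_eq_snd g).symm.trans hg⟩
  have g_eq : g = kerInl f k * kerInr f k' := Subtype.ext (kerInl_mul_kerInr k k').symm
  have kerInl_mem : kerInl f k ∈ noncommCentralizerClosure (kernelPair f) :=
    Subgroup.subset_closure ⟨kerInr f u, kerInr f v, commute_kerInl_kerInr f k u,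
      commute_kerInl_kerInr f k v, mt (Commute.of_map (kerInr_injective f)) huv⟩
  have kerInr_mem : kerInr f k' ∈ noncommCentralizerClosure (kernelPair f) :=
    Subgroup.subset_closure ⟨kerInl f u, kerInl f v, (commute_kerInl_kerInr f u k').symm,
      (commute_kerInl_kerInr f v k').symm, mt (Commute.of_map (kerInl_injective f)) huv⟩
  exact g_eq ▸ mul_mem kerInl_mem kerInr_mem

theorem noncommCentralizerClosure_kernelPair (hL : IsCommutationTransitive L) {f : L →* Q}
    (hf : ∃ u v : f.ker, ¬Commute u v) :
    noncommCentralizerClosure (kernelPair f) = (kernelPairHom f).ker :=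
  (noncommCentralizerClosure_kernelPair_le hL f).antisymm (ker_kernelPairHom_le hf)

theorem nonempty_mulEquiv_of_kernelPair_mulEquiv {L' Q' : Type*} [Group L'] [Group Q']
    (hL : IsCommutationTransitive L) (hL' : IsCommutationTransitive L')
    {f : L →* Q} (hf : Function.Surjective f) (hfker : ∃ u v : f.ker, ¬Commute u v)
    {f' : L' →* Q'} (hf' : Function.Surjective f') (hfker' : ∃ u v : f'.ker, ¬Commute u v)
    (e : kernelPair f ≃* kernelPair f') : Nonempty (Q ≃* Q') := by
  have map_ker : (kernelPairHom f).ker.map (e : kernelPair f →* kernelPair f') =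
      (kernelPairHom f').ker := by
    rw [← noncommCentralizerClosure_kernelPair hL hfker,
      ← noncommCentralizerClosure_kernelPair hL' hfker', map_noncommCentralizerClosure]
  exact ⟨(QuotientGroup.quotientKerEquivOfSurjective _ (kernelPairHom_surjective hf)).symm.trans <|
    (QuotientGroup.congr _ _ e map_ker).trans <|
      QuotientGroup.quotientKerEquivOfSurjective _ (kernelPairHom_surjective hf')⟩

end KernelPair

section Embedding

/-- The action of `G` on `FreeGroup G` that permutes the generators by left translation. -/
def translationAut (G : Type*) [Group G] : G →* MulAut (FreeGroup G) where
  toFun g := FreeGroup.freeGroupCongr (MulAction.toPerm g)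
  map_one' := MulEquiv.toMonoidHom_injective (FreeGroup.ext_hom _ _ fun _ ↦ by simp)
  map_mul' g h := MulEquiv.toMonoidHom_injective (FreeGroup.ext_hom _ _ fun _ ↦ by simp [mul_assoc])

theorem translationAut_of {G : Type*} [Group G] (g h : G) :
    translationAut G g (of h) = of (g * h) :=
  FreeGroup.map.of

-- Sending `a` to the generator at `1` and `b` to the translation by a generator of `ℤ` maps
-- `FreeGroup α` to `FreeGroup ℤ ⋊ ℤ` and takes the `n`-th conjugate to the `n`-th free generator.
theorem lift_conj_zpow_injective {α : Type*} {a b : α} (hab : a ≠ b) :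
    Function.Injective (FreeGroup.lift fun n : Multiplicative ℤ ↦
      of b ^ n.toAdd * of a * (of b ^ n.toAdd)⁻¹) := by
  classical
  let ρ : FreeGroup α →*
      FreeGroup (Multiplicative ℤ) ⋊[translationAut (Multiplicative ℤ)] Multiplicative ℤ :=
    FreeGroup.lift (Function.update (fun _ ↦ SemidirectProduct.inl (of 1)) b
      (SemidirectProduct.inr (Multiplicative.ofAdd 1)))
  have ρ_a : ρ (of a) = SemidirectProduct.inl (of 1) := by simp [ρ, hab]
  have ρ_b : ρ (of b) = SemidirectProduct.inr (Multiplicative.ofAdd 1) := by simp [ρ]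
  have ρ_comp_lift : ρ.comp (FreeGroup.lift fun n : Multiplicative ℤ ↦
      of b ^ n.toAdd * of a * (of b ^ n.toAdd)⁻¹) = SemidirectProduct.inl := by
    refine FreeGroup.ext_hom _ _ fun n ↦ ?_
    have ρ_b_zpow : ρ (of b ^ n.toAdd) = SemidirectProduct.inr n := by
      rw [map_zpow, ρ_b, ← map_zpow, ← ofAdd_zsmul, smul_eq_mul, mul_one, ofAdd_toAdd]
    rw [MonoidHom.comp_apply, FreeGroup.lift_apply_of, map_mul, map_mul, map_inv, ρ_b_zpow, ρ_a,
      ← map_inv, ← SemidirectProduct.inl_aut, translationAut_of, mul_one]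
  refine Function.Injective.of_comp (f := ρ) ?_
  rw [← MonoidHom.coe_comp, ρ_comp_lift]
  exact SemidirectProduct.inl_injective

theorem exists_injective_freeGroup_monoidHom (β α : Type*) [Countable β] [Nontrivial α] :
    ∃ ι : FreeGroup β →* FreeGroup α, Function.Injective ι := by
  obtain ⟨a, b, hab⟩ := exists_pair_ne α
  obtain ⟨index, index_injective⟩ := exists_injective_nat β
  have ofAdd_index_injective :
      Function.Injective fun x ↦ Multiplicative.ofAdd (index x : ℤ) :=
    Multiplicative.ofAdd.injective.comp (Nat.cast_injective.comp index_injective)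
  exact ⟨(FreeGroup.lift _).comp (FreeGroup.map _),
    (lift_conj_zpow_injective hab).comp (FreeGroup.map_injective ofAdd_index_injective)⟩

end Embedding

section SubgroupOfCountableGroup

variable (Q : Type*) [Group Q]

/-- The presentation of `Q` with all its elements as generators, together with two redundant
generators sent to `1`, which make its kernel noncommutative. -/
def presentation : FreeGroup (Q ⊕ Fin 2) →* Q :=
  FreeGroup.lift (Sum.elim id 1)

theorem presentation_surjective : Function.Surjective (presentation Q) :=
  fun q ↦ ⟨of (Sum.inl q), FreeGroup.lift_apply_of⟩

theorem exists_not_commute_ker_presentation :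
    ∃ u v : (presentation Q).ker, ¬Commute u v := by
  have of_inr_mem (i : Fin 2) : of (Sum.inr i) ∈ (presentation Q).ker := FreeGroup.lift_apply_of
  refine ⟨⟨_, of_inr_mem 0⟩, ⟨_, of_inr_mem 1⟩, fun h ↦ ?_⟩
  exact not_commute_of_of (Sum.inr_injective.ne zero_ne_one)
    (h.map (presentation Q).ker.subtype)

theorem exists_subgroup_prod_mulEquiv_kernelPair_presentation (α : Type*) [Countable Q]
    [Nontrivial α] :
    ∃ P : Subgroup (FreeGroup α × FreeGroup α), Nonempty (kernelPair (presentation Q) ≃* P) := by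
  obtain ⟨ι, hι⟩ := exists_injective_freeGroup_monoidHom (Q ⊕ Fin 2) α
  exact ⟨_, ⟨(kernelPair (presentation Q)).equivMapOfInjective (ι.prodMap ι) (hι.prodMap hι)⟩⟩

theorem nonempty_mulEquiv_of_kernelPair_presentation_mulEquiv {Q Q' : Type*} [Group Q] [Group Q']
    (e : kernelPair (presentation Q) ≃* kernelPair (presentation Q')) : Nonempty (Q ≃* Q') :=
  nonempty_mulEquiv_of_kernelPair_mulEquiv
    (isCommutationTransitive_of_isFreeGroup _) (isCommutationTransitive_of_isFreeGroup _)
    (presentation_surjective Q) (exists_not_commute_ker_presentation Q)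
    (presentation_surjective Q') (exists_not_commute_ker_presentation Q') e

end SubgroupOfCountableGroup

section PrimeSum

/-- The direct sum of the cyclic groups of order `p` for `p` in a set `S` of primes. -/
abbrev PrimeSum (S : Set Nat.Primes) : Type :=
  Π₀ p : S, ZMod p

theorem exists_addOrderOf_eq_iff_mem {S : Set Nat.Primes} {p : Nat.Primes} :
    (∃ x : PrimeSum S, addOrderOf x = p) ↔ p ∈ S := by
  constructor
  · rintro ⟨x, hx⟩
    have : Fact (p : ℕ).Prime := ⟨p.2⟩
    obtain ⟨p_nsmul_x, x_ne_zero⟩ := addOrderOf_eq_prime_iff.1 hx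
    obtain ⟨q, x_q_ne_zero⟩ := DFinsupp.ne_iff.1 x_ne_zero
    have : Fact (q : ℕ).Prime := ⟨q.1.2⟩
    have p_nsmul_x_q : ((p : ℕ) : ZMod q) * x q = 0 := by
      simpa using DFunLike.congr_fun p_nsmul_x q
    have q_dvd_p : (q : ℕ) ∣ p := (ZMod.natCast_eq_zero_iff _ _).1 <|
      (mul_eq_zero.1 p_nsmul_x_q).resolve_right x_q_ne_zero
    have q_eq_p : q.1 = p := Subtype.ext ((Nat.prime_dvd_prime_iff_eq q.1.2 p.2).1 q_dvd_p)
    exact q_eq_p ▸ q.2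
  · intro hp
    let single := DFinsupp.singleAddHom (fun q : S ↦ ZMod q) ⟨p, hp⟩
    have single_injective : Function.Injective single :=
      DFinsupp.single_injective (β := fun q : S ↦ ZMod q) (i := ⟨p, hp⟩)
    exact ⟨single 1, (addOrderOf_injective single single_injective 1).trans (ZMod.addOrderOf_one p)⟩

theorem eq_of_primeSum_addEquiv {S T : Set Nat.Primes} (e : PrimeSum S ≃+ PrimeSum T) : S = T := by
  ext p
  rw [← exists_addOrderOf_eq_iff_mem, ← exists_addOrderOf_eq_iff_mem]
  exact e.toEquiv.exists_congr fun x ↦ by simp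

end PrimeSum

end BaumslagRoseblade

open BaumslagRoseblade in
theorem continuum_many_nonisomorphic_subgroups_of_F2_prod_F2_general (α : Type*) [Nontrivial α] :
    ∃ (I : Type) (f : I → Subgroup (FreeGroup α × FreeGroup α)),
      Cardinal.mk I = Cardinal.continuum ∧
      ∀ i j : I, i ≠ j → IsEmpty (f i ≃* f j) := by
  have (S : Set Nat.Primes) : Countable (Multiplicative (PrimeSum S)) :=
    inferInstanceAs (Countable (PrimeSum S))
  choose P hP using fun S : Set Nat.Primes ↦
    exists_subgroup_prod_mulEquiv_kernelPair_presentation (Multiplicative (PrimeSum S)) α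
  refine ⟨Set Nat.Primes, P, ?_, fun S T hST ↦ ⟨fun e ↦ hST ?_⟩⟩
  · rw [Cardinal.mk_set, Cardinal.mk_eq_aleph0, Cardinal.two_power_aleph0]
  · obtain ⟨eS⟩ := hP S
    obtain ⟨eT⟩ := hP T
    obtain ⟨e'⟩ := nonempty_mulEquiv_of_kernelPair_presentation_mulEquiv
      ((eS.trans e).trans eT.symm)
    exact eq_of_primeSum_addEquiv (AddEquiv.toMultiplicative.symm e')

/-- There exists a family, indexed by a set of cardinality `2^ℵ₀` (the continuum), of subgroups
of `F₂ × F₂` (the direct product of two free groups of rank two) that are pairwise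
non-isomorphic as abstract groups. -/
theorem continuum_many_nonisomorphic_subgroups_of_F2_prod_F2 :
    ∃ (I : Type) (f : I → Subgroup (FreeGroup (Fin 2) × FreeGroup (Fin 2))),
      Cardinal.mk I = Cardinal.continuum ∧
      ∀ i j : I, i ≠ j → IsEmpty (f i ≃* f j) :=
  continuum_many_nonisomorphic_subgroups_of_F2_prod_F2_general (Fin 2)
end
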